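/- Let K belong to the class R and let uv be an edge of K where the vertex v is non-singular. Then lk(u,K) ∩ lk(v,K) − lk(uv,K) is nonempty. -/

import Mathlib

/-- An abstract simplicial complex on vertex set `ℕ`: a finite, downward closed
collection of nonempty finite sets of vertices. -/
structure SComplex where
  faces : Finset (Finset ℕ)
  not_empty_mem : ∅ ∉ faces
  down_closed : ∀ s ∈ faces, ∀ t ⊆ s, t ≠ ∅ → t ∈ faces

namespace SComplex

/-- The set of vertices of the complex. -/
def vertexSet (K : SComplex) : Finset ℕ := K.faces.sup id

/-- `fnum K i` is the number of `i`-dimensional faces of `K`. -/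
def fnum (K : SComplex) (i : ℕ) : ℕ := (K.faces.filter fun s => s.card = i + 1).card

/-- `g₂` for a 3-dimensional complex: `f₁ - 4 f₀ + 10`. -/
def g2 (K : SComplex) : ℤ := (K.fnum 1 : ℤ) - 4 * (K.fnum 0 : ℤ) + 10

/-- `g₂` for a 2-dimensional complex: `f₁ - 3 f₀ + 6`. -/
def g2surf (K : SComplex) : ℤ := (K.fnum 1 : ℤ) - 3 * (K.fnum 0 : ℤ) + 6

/-- Euler characteristic of a (2-dimensional) complex. -/
def euler (K : SComplex) : ℤ := (K.fnum 0 : ℤ) - (K.fnum 1 : ℤ) + (K.fnum 2 : ℤ)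

/-- The link of a face `σ`. -/
def lk (K : SComplex) (σ : Finset ℕ) : SComplex where
  faces := K.faces.filter fun γ => γ ∩ σ = ∅ ∧ γ ∪ σ ∈ K.faces
  not_empty_mem := fun h => K.not_empty_mem (Finset.mem_filter.mp h).1
  down_closed := by
    intro s hs t hts ht
    rw [Finset.mem_filter] at hs ⊢
    refine ⟨K.down_closed s hs.1 t hts ht, ?_, ?_⟩
    · have h1 : t ∩ σ ⊆ s ∩ σ := Finset.inter_subset_inter hts (Finset.Subset.refl σ)
      rw [hs.2.1] at h1
      exact Finset.subset_empty.mp h1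
    · refine K.down_closed (s ∪ σ) hs.2.2 (t ∪ σ)
        (Finset.union_subset_union hts (Finset.Subset.refl σ)) ?_
      intro hc
      exact ht (Finset.union_eq_empty.mp hc).1

/-- The (closed) star of a face `σ`. -/
def st (K : SComplex) (σ : Finset ℕ) : SComplex where
  faces := K.faces.filter fun α => α ∪ σ ∈ K.faces
  not_empty_mem := fun h => K.not_empty_mem (Finset.mem_filter.mp h).1
  down_closed := by
    intro s hs t hts ht
    rw [Finset.mem_filter] at hs ⊢
    refine ⟨K.down_closed s hs.1 t hts ht, ?_⟩
    refine K.down_closed (s ∪ σ) hs.2 (t ∪ σ)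
      (Finset.union_subset_union hts (Finset.Subset.refl σ)) ?_
    intro hc
    exact ht (Finset.union_eq_empty.mp hc).1

/-- A facet is a maximal face. -/
def IsFacet (K : SComplex) (s : Finset ℕ) : Prop :=
  s ∈ K.faces ∧ ∀ t ∈ K.faces, s ⊆ t → s = t

/-- A pure `d`-dimensional complex: all facets have `d+1` vertices. -/
def IsPure (K : SComplex) (d : ℕ) : Prop :=
  K.faces.Nonempty ∧ ∀ s, K.IsFacet s → s.card = d + 1

/-- Two facets are adjacent if they share a codimension-one face. -/
def FacetAdj (K : SComplex) (s t : Finset ℕ) : Prop :=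
  K.IsFacet s ∧ K.IsFacet t ∧ (s ∩ t).card + 1 = s.card

/-- Strong connectedness: any two facets are joined by a chain of facets, consecutive
ones sharing a codimension-one face. -/
def StronglyConnected (K : SComplex) : Prop :=
  ∀ s t, K.IsFacet s → K.IsFacet t → Relation.ReflTransGen K.FacetAdj s t

/-- Two vertices are adjacent if they span an edge. -/
def VertAdj (K : SComplex) (u v : ℕ) : Prop := ({u, v} : Finset ℕ) ∈ K.faces

/-- Connectedness of a complex (via its 1-skeleton). -/
def Conn (K : SComplex) : Prop :=
  K.faces.Nonempty ∧
    ∀ u v, {u} ∈ K.faces → {v} ∈ K.faces → Relation.ReflTransGen K.VertAdj u v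

/-- A normal `d`-pseudomanifold: pure, strongly connected, every `(d-1)`-face is in
exactly two facets, and links of faces of dimension at most `d-2` are connected. -/
def IsNormalPseudomanifold (K : SComplex) (d : ℕ) : Prop :=
  K.IsPure d ∧ K.StronglyConnected ∧
    (∀ s ∈ K.faces, s.card = d →
      (K.faces.filter fun F => F.card = d + 1 ∧ s ⊆ F).card = 2) ∧
    (∀ s ∈ K.faces, s.card ≤ d - 1 → (K.lk s).Conn)

/-- The geometric realization `|K|`, as a subspace of `ℕ → ℝ`. -/
def realSpace (K : SComplex) : Set (ℕ → ℝ) :=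
  {w | (∀ v, 0 ≤ w v) ∧ ∃ s ∈ K.faces, (∀ v, w v ≠ 0 → v ∈ s) ∧ ∑ v ∈ s, w v = 1}

/-- The link of the vertex `v` triangulates the `(d-1)`-sphere. -/
def HasSphereLink (K : SComplex) (d : ℕ) (v : ℕ) : Prop :=
  Nonempty (↥((K.lk {v}).realSpace) ≃ₜ
    ↥(Metric.sphere (0 : EuclideanSpace ℝ (Fin d)) 1))

/-- A singular vertex of a normal 3-pseudomanifold: its link is not a 2-sphere. -/
def IsSingular (K : SComplex) (v : ℕ) : Prop :=
  {v} ∈ K.faces ∧ ¬ K.HasSphereLink 3 v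

/-- `d(σ)`: the number of vertices of the link of `σ`. -/
def deg (K : SComplex) (σ : Finset ℕ) : ℕ := (K.lk σ).fnum 0

/-- The boundary complex of the simplex on vertex set `s`: all nonempty proper subsets. -/
def properFaces (s : Finset ℕ) : Finset (Finset ℕ) :=
  s.powerset.filter fun t => t ≠ ∅ ∧ t ≠ s

/-- All nonempty faces of the simplex on vertex set `s`. -/
def simplexFaces (s : Finset ℕ) : Finset (Finset ℕ) :=
  s.powerset.filter fun t => t ≠ ∅

/-- Operation (A): a bistellar 2-move on an edge `uv` with `lk(uv) = ∂(abc)`, `abc ∉ K`. -/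
def BistellarTwoMove (K K' : SComplex) : Prop :=
  ∃ u v a b c : ℕ,
    ({u, v} : Finset ℕ) ∈ K.faces ∧ u ≠ v ∧
    ({a, b, c} : Finset ℕ).card = 3 ∧
    u ∉ ({a, b, c} : Finset ℕ) ∧ v ∉ ({a, b, c} : Finset ℕ) ∧
    (K.lk {u, v}).faces = properFaces {a, b, c} ∧
    ({a, b, c} : Finset ℕ) ∉ K.faces ∧
    K'.faces = ((K.faces.filter fun α => ¬ ({u, v} : Finset ℕ) ⊆ α) ∪
      simplexFaces (insert u {a, b, c})) ∪ simplexFaces (insert v {a, b, c})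

/-- The faces of the boundary complex of a pure `d`-dimensional complex with face set `F`:
faces contained in some `(d-1)`-face lying in exactly one facet. -/
def bdryFaces (F : Finset (Finset ℕ)) (d : ℕ) : Finset (Finset ℕ) :=
  F.filter fun s => ∃ r ∈ F, s ⊆ r ∧ r.card = d ∧
    (F.filter fun t => t.card = d + 1 ∧ r ⊆ t).card = 1

/-- The faces of the cone with apex `w` over the complex with face set `F`. -/
def coneFaces (w : ℕ) (F : Finset (Finset ℕ)) : Finset (Finset ℕ) :=
  (F ∪ F.image (insert w)) ∪ {{w}}

/-- `K₁` is obtained from the normal `d`-pseudomanifold `K` by contracting the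
edge `uv` (satisfying the link condition): delete all faces containing `u` or `v`
and cone off the boundary of the result with a new vertex `w`. -/
def EdgeContractionAt (d : ℕ) (K : SComplex) (u v : ℕ) (K₁ : SComplex) : Prop :=
  ({u, v} : Finset ℕ) ∈ K.faces ∧ u ≠ v ∧
  (K.lk {u}).faces ∩ (K.lk {v}).faces = (K.lk {u, v}).faces ∧
  ∃ w, w ∉ K.vertexSet ∧
    K₁.faces = (K.faces.filter fun α => u ∉ α ∧ v ∉ α) ∪
      coneFaces w (bdryFaces (K.faces.filter fun α => u ∉ α ∧ v ∉ α) d)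

/-- Operation (B): an edge contraction in a 3-dimensional complex. -/
def EdgeContraction (K K₁ : SComplex) : Prop := ∃ u v, EdgeContractionAt 3 K u v K₁

/-- The class `R`: normal 3-pseudomanifolds with one or two singular vertices such that
(i) if `K` contains the boundary of a 3-simplex then it contains the 3-simplex and
(ii) no normal 3-pseudomanifold with smaller `g₂` is obtained from `K` by a
bistellar 2-move, an edge contraction, an edge expansion followed by a bistellar
2-move, or an edge expansion followed by an edge contraction. -/
def InClassR (K : SComplex) : Prop :=
  K.IsNormalPseudomanifold 3 ∧
  1 ≤ {v | K.IsSingular v}.ncard ∧ {v | K.IsSingular v}.ncard ≤ 2 ∧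
  (∀ s : Finset ℕ, s.card = 4 → (∀ t ∈ properFaces s, t ∈ K.faces) → s ∈ K.faces) ∧
  (∀ K' : SComplex, K'.IsNormalPseudomanifold 3 →
    (BistellarTwoMove K K' ∨ EdgeContraction K K' ∨
      (∃ M, EdgeContraction M K ∧ BistellarTwoMove M K') ∨
      (∃ M, EdgeContraction M K ∧ EdgeContraction M K')) →
    K.g2 ≤ K'.g2)

/-!
Suppose `lk u ∩ lk v ⊆ lk uv`. Then the edge `uv` can be contracted, which changes `g₂` by
`3 - d(uv)`, so minimality of `g₂` forces `d(uv) ≤ 3`, i.e. `lk uv` is the boundary of a triangle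
`T`. If `T` were a face, the boundaries of the tetrahedra `uT` and `vT` would lie in `K`, hence both
tetrahedra would, and `T` would lie in `lk u ∩ lk v` but not in `lk uv`. So `T` is not a face, and
the bistellar 2-move replacing `uv * ∂T` by `∂(uv) * T` lowers `g₂` by one, a contradiction.

Both moves have to preserve normal pseudomanifolds. This is checked on links: a pure complex with
connected links of codimension at least two is strongly connected. For the contraction, the link of
a face at the new vertex is the union of two links of `K`, each with one vertex deleted, and
deleting a vertex from a connected link keeps it connected because the link of that vertex is itself
connected or, at the bottom, the graph is a cycle.
-/

section

open Finset Relation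

variable {K : SComplex} {d : ℕ} {A T σ s t γ : Finset ℕ} {i : ℕ} {a b p q u v w x : ℕ}

/-! ### Faces, links and vertex sets -/

@[ext]
theorem ext {K L : SComplex} (h : K.faces = L.faces) : K = L := by
  cases K
  cases L
  congr

theorem nonempty_of_mem (hs : s ∈ K.faces) : s.Nonempty :=
  nonempty_iff_ne_empty.2 fun h => K.not_empty_mem (h ▸ hs)

theorem mem_of_subset (ht : t ∈ K.faces) (hst : s ⊆ t) (hs : s.Nonempty) : s ∈ K.faces :=
  K.down_closed t ht s hst hs.ne_empty

theorem mem_vertexSet : v ∈ K.vertexSet ↔ {v} ∈ K.faces := by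
  simp only [vertexSet, mem_sup, id_eq]
  exact ⟨fun ⟨s, hs, hv⟩ => mem_of_subset hs (singleton_subset_iff.2 hv) (singleton_nonempty v),
    fun h => ⟨{v}, h, mem_singleton_self v⟩⟩

theorem subset_vertexSet (hs : s ∈ K.faces) : s ⊆ K.vertexSet :=
  le_sup (f := id) hs

theorem notMem_of_notMem_vertexSet (hv : v ∉ K.vertexSet) (hs : s ∈ K.faces) : v ∉ s :=
  fun h => hv (subset_vertexSet hs h)

theorem mem_lk :
    γ ∈ (K.lk σ).faces ↔ γ.Nonempty ∧ Disjoint γ σ ∧ γ ∪ σ ∈ K.faces := by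
  simp only [lk, mem_filter, ← disjoint_iff_inter_eq_empty]
  exact ⟨fun ⟨h, h'⟩ => ⟨nonempty_of_mem h, h'⟩,
    fun ⟨h, h'⟩ => ⟨mem_of_subset h'.2 subset_union_left h, h'⟩⟩

theorem mem_lk_singleton :
    γ ∈ (K.lk {v}).faces ↔ γ.Nonempty ∧ v ∉ γ ∧ insert v γ ∈ K.faces := by
  rw [mem_lk, disjoint_singleton_right, union_comm, ← insert_eq]

theorem mem_lk_pair :
    γ ∈ (K.lk {u, v}).faces ↔
      γ.Nonempty ∧ u ∉ γ ∧ v ∉ γ ∧ insert u (insert v γ) ∈ K.faces := by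
  rw [mem_lk, disjoint_insert_right, disjoint_singleton_right, union_comm, insert_union,
    ← insert_eq, and_assoc]

@[simp]
theorem lk_empty : K.lk ∅ = K := by
  ext γ
  simpa [mem_lk] using nonempty_of_mem

theorem lk_lk_singleton (hx : x ∉ σ) : (K.lk σ).lk {x} = K.lk (insert x σ) := by
  ext γ
  simp only [mem_lk (K := K), mem_lk_singleton, insert_nonempty, disjoint_insert_left,
    disjoint_insert_right, insert_union, union_insert]
  tauto

theorem mem_vertexSet_lk : p ∈ (K.lk σ).vertexSet ↔ p ∉ σ ∧ insert p σ ∈ K.faces := by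
  simp [mem_vertexSet, mem_lk]

theorem vertAdj_lk :
    (K.lk σ).VertAdj a b ↔ a ∉ σ ∧ b ∉ σ ∧ insert a (insert b σ) ∈ K.faces := by
  simp [VertAdj, mem_lk, and_assoc]

theorem VertAdj.symm (h : K.VertAdj a b) : K.VertAdj b a := by
  rwa [VertAdj, pair_comm]

instance : Std.Symm K.VertAdj where
  symm _ _ := VertAdj.symm

theorem disjoint_vertexSet_lk (K : SComplex) (σ : Finset ℕ) : Disjoint (K.lk σ).vertexSet σ :=
  disjoint_left.2 fun _ h => (mem_vertexSet_lk.1 h).1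

theorem card_cofaces (K : SComplex) (s : Finset ℕ) :
    (K.faces.filter fun F => F.card = s.card + 1 ∧ s ⊆ F).card = (K.lk s).vertexSet.card := by
  have himage : (K.faces.filter fun F => F.card = s.card + 1 ∧ s ⊆ F) =
      (K.lk s).vertexSet.image (insert · s) := by
    ext F
    simp only [mem_filter, mem_image, mem_vertexSet_lk]
    constructor
    · rintro ⟨hF, hcard, hsF⟩
      obtain ⟨p, hp, rfl⟩ := exists_eq_insert_iff.2 ⟨hsF, hcard.symm⟩
      exact ⟨p, ⟨hp, hF⟩, rfl⟩
    · rintro ⟨p, ⟨hp, hF⟩, rfl⟩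
      exact ⟨hF, card_insert_of_notMem hp, subset_insert p s⟩
  rw [himage, card_image_of_injOn]
  exact fun p hp q _ hpq => (insert_inj (mem_vertexSet_lk.1 hp).1).1 hpq

theorem fnum_zero (K : SComplex) : K.fnum 0 = K.vertexSet.card := by
  simpa [fnum] using K.card_cofaces ∅

theorem deg_eq (K : SComplex) (σ : Finset ℕ) : K.deg σ = (K.lk σ).vertexSet.card :=
  fnum_zero _

/-! ### Antistars -/

/-- The antistar of a vertex, i.e. the complex obtained by deleting `v`. -/
def antistar (K : SComplex) (v : ℕ) : SComplex where
  faces := K.faces.filter (v ∉ ·)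
  not_empty_mem h := K.not_empty_mem (mem_filter.1 h).1
  down_closed s hs t hts ht := mem_filter.2
    ⟨K.down_closed s (mem_filter.1 hs).1 t hts ht, fun h => (mem_filter.1 hs).2 (hts h)⟩

theorem mem_antistar : s ∈ (K.antistar v).faces ↔ s ∈ K.faces ∧ v ∉ s :=
  mem_filter

theorem vertAdj_antistar : (K.antistar v).VertAdj a b ↔ K.VertAdj a b ∧ a ≠ v ∧ b ≠ v := by
  simp [VertAdj, mem_antistar, eq_comm]

theorem vertexSet_antistar (K : SComplex) (v : ℕ) :
    (K.antistar v).vertexSet = K.vertexSet.erase v := by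
  ext p
  simp [mem_vertexSet, mem_antistar, eq_comm, and_comm]

theorem vertexSet_lk_antistar (hv : v ∉ s) :
    ((K.antistar v).lk s).vertexSet = (K.lk s).vertexSet.erase v := by
  ext p
  simp only [mem_vertexSet_lk, mem_antistar, mem_insert, mem_erase]
  grind

theorem fnum_one_eq (K : SComplex) (v : ℕ) :
    K.fnum 1 = (K.antistar v).fnum 1 + K.deg {v} := by
  have hdeg : K.deg {v} = (K.faces.filter fun F => F.card = 1 + 1 ∧ v ∈ F).card := by
    simpa using (K.deg_eq {v}).trans (K.card_cofaces {v}).symm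
  rw [hdeg, fnum, fnum, antistar, filter_filter, filter_congr fun _ _ => and_comm,
    ← filter_filter, ← filter_filter]
  exact (card_filter_add_card_filter_not _).symm.trans (add_comm _ _)

theorem fnum_zero_eq (hv : v ∈ K.vertexSet) : K.fnum 0 = (K.antistar v).fnum 0 + 1 := by
  rw [fnum_zero, fnum_zero, vertexSet_antistar, card_erase_add_one hv]

/-! ### Normal pseudomanifolds in terms of vertex links -/

/-- Two vertices are joined if an edge path leads from one to the other. -/
abbrev Joined (K : SComplex) : ℕ → ℕ → Prop := ReflTransGen K.VertAdj

theorem Joined.symm (h : K.Joined a b) : K.Joined b a :=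
  symm_of (ReflTransGen K.VertAdj) h

theorem Joined.mem_vertexSet (h : K.Joined a b) (ha : a ∈ K.vertexSet) : b ∈ K.vertexSet := by
  obtain rfl | ⟨c, -, hcb⟩ := h.cases_tail
  exacts [ha, subset_vertexSet hcb (mem_insert_of_mem (mem_singleton_self b))]

theorem isFacet_iff_maximal : K.IsFacet s ↔ Maximal (· ∈ K.faces) s :=
  ⟨fun h => ⟨h.1, fun t ht hst => (h.2 t ht hst).ge⟩, fun h => ⟨h.1, fun _ => h.eq_of_le⟩⟩

theorem IsPure.exists_facet_superset (hK : K.IsPure d) (hs : s ∈ K.faces) :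
    ∃ F ∈ K.faces, s ⊆ F ∧ F.card = d + 1 := by
  obtain ⟨F, hsF, hF⟩ := K.faces.exists_le_maximal hs
  exact ⟨F, hF.1, hsF, hK.2 F (isFacet_iff_maximal.2 hF)⟩

theorem IsPure.card_le (hK : K.IsPure d) (hs : s ∈ K.faces) : s.card ≤ d + 1 := by
  obtain ⟨F, -, hsF, hF⟩ := hK.exists_facet_superset hs
  exact hF ▸ card_le_card hsF

theorem IsNormalPseudomanifold.card_vertexSet_lk (hK : K.IsNormalPseudomanifold d)
    (hs : s ∈ K.faces) (hsd : s.card = d) : (K.lk s).vertexSet.card = 2 := by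
  rw [← card_cofaces, hsd, hK.2.2.1 s hs hsd]

theorem IsNormalPseudomanifold.joined (hK : K.IsNormalPseudomanifold d) (hd : 0 < d)
    (hp : p ∈ K.vertexSet) (hq : q ∈ K.vertexSet) : K.Joined p q := by
  obtain ⟨hpure, hconn, -⟩ := hK
  obtain ⟨F, hF, hpF⟩ := K.faces.exists_le_maximal (mem_vertexSet.1 hp)
  obtain ⟨G, hG, hqG⟩ := K.faces.exists_le_maximal (mem_vertexSet.1 hq)
  rw [← isFacet_iff_maximal] at hpF hqG
  have joined_of_mem : ∀ {H a b}, K.IsFacet H → a ∈ H → b ∈ H → K.Joined a b :=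
    fun hH ha hb => .single (mem_of_subset hH.1 (insert_subset ha (singleton_subset_iff.2 hb))
      (insert_nonempty _ _))
  induction hconn F G hpF hqG generalizing q with
  | refl => exact joined_of_mem hpF (hF (mem_singleton_self p)) (hG (mem_singleton_self q))
  | @tail H G _ hHG ih =>
    obtain ⟨c, hc⟩ : (H ∩ G).Nonempty := by
      rw [← card_pos]
      have := hpure.2 H hHG.1
      have := hHG.2.2
      lia
    rw [mem_inter] at hc
    have hcK : {c} ∈ K.faces := mem_of_subset hHG.1.1 (singleton_subset_iff.2 hc.1) (by simp)
    exact (ih (mem_vertexSet.2 hcK) (singleton_subset_iff.2 hc.1) hHG.1).trans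
      (joined_of_mem hqG hc.2 (hG (mem_singleton_self q)))

theorem IsNormalPseudomanifold.joined_lk (hK : K.IsNormalPseudomanifold d) (hσ : σ.card < d)
    (hp : p ∈ (K.lk σ).vertexSet) (hq : q ∈ (K.lk σ).vertexSet) : (K.lk σ).Joined p q := by
  obtain rfl | hne := σ.eq_empty_or_nonempty
  · rw [lk_empty] at *
    exact hK.joined (by lia) hp hq
  · have hσK : σ ∈ K.faces := mem_of_subset (mem_vertexSet_lk.1 hp).2 (subset_insert p σ) hne
    exact (hK.2.2.2 σ hσK (by lia)).2 p q (mem_vertexSet.1 hp) (mem_vertexSet.1 hq)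

theorem IsNormalPseudomanifold.exists_insert_erase_mem (hK : K.IsNormalPseudomanifold d)
    (hs : s ∈ K.faces) (hsd : s.card = d + 1) (hv : v ∈ s) (hne : (s.erase v).Nonempty) :
    ∃ y ∉ s, insert y (s.erase v) ∈ K.faces := by
  have hridge : (s.erase v).card = d := by rw [card_erase_of_mem hv, hsd, Nat.add_sub_cancel]
  have htwo := hK.card_vertexSet_lk (mem_of_subset hs (erase_subset v s) hne) hridge
  obtain ⟨y, hy, hyv⟩ := exists_mem_ne (htwo ▸ one_lt_two) v
  obtain ⟨hys, hyK⟩ := mem_vertexSet_lk.1 hy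
  exact ⟨y, fun h => hys (mem_erase.2 ⟨hyv, h⟩), hyK⟩

theorem IsNormalPseudomanifold.exists_facet_notMem (hK : K.IsNormalPseudomanifold d)
    (hs : s ∈ K.faces) (hv : v ∉ s) : ∃ F ∈ K.faces, s ⊆ F ∧ F.card = d + 1 ∧ v ∉ F := by
  obtain ⟨F, hF, hsF, hcard⟩ := hK.1.exists_facet_superset hs
  by_cases hvF : v ∈ F
  · have hsR : s ⊆ F.erase v := subset_erase.2 ⟨hsF, hv⟩
    obtain ⟨y, hyF, hyK⟩ := hK.exists_insert_erase_mem hF hcard hvF ((nonempty_of_mem hs).mono hsR)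
    refine ⟨_, hyK, hsR.trans (subset_insert y _), ?_, by grind⟩
    rw [card_insert_of_notMem fun h => hyF (mem_of_mem_erase h), card_erase_add_one hvF, hcard]
  · exact ⟨F, hF, hsF, hcard, hvF⟩

theorem reflTransGen_facetAdj_of_joined_lk (hpure : K.IsPure d)
    (hlk : ∀ σ : Finset ℕ, σ.card < d → ∀ p ∈ (K.lk σ).vertexSet, ∀ q ∈ (K.lk σ).vertexSet,
      (K.lk σ).Joined p q)
    (hσ : σ.card ≤ d) (hs : K.IsFacet s) (ht : K.IsFacet t) (hσs : σ ⊆ s) (hσt : σ ⊆ t) :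
    ReflTransGen K.FacetAdj s t := by
  induction hk : d - σ.card generalizing σ s t with
  | zero =>
    have hinter : σ.card ≤ (s ∩ t).card := card_le_card (subset_inter hσs hσt)
    have hscard := hpure.2 s hs
    have htcard := hpure.2 t ht
    obtain rfl | hst := eq_or_ne s t
    · rfl
    · have hlt : (s ∩ t).card < s.card := card_lt_card (inf_lt_left.2 fun h => hst (hs.2 t ht.1 h))
      exact .single ⟨hs, ht, by lia⟩
  | succ k ih =>
    have hlt : ∀ {H}, K.IsFacet H → σ.card < H.card := fun hH => by rw [hpure.2 _ hH]; lia
    obtain ⟨p, hps, hpσ⟩ := exists_mem_notMem_of_card_lt_card (hlt hs)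
    obtain ⟨q, hqt, hqσ⟩ := exists_mem_notMem_of_card_lt_card (hlt ht)
    have mem_lk_of_mem : ∀ {H c}, K.IsFacet H → σ ⊆ H → c ∈ H → c ∉ σ → c ∈ (K.lk σ).vertexSet :=
      fun hH hσH hc hcσ => mem_vertexSet_lk.2
        ⟨hcσ, mem_of_subset hH.1 (insert_subset hc hσH) (insert_nonempty _ _)⟩
    have ih_insert : ∀ {c H H'}, c ∉ σ → K.IsFacet H → K.IsFacet H' → insert c σ ⊆ H →
        insert c σ ⊆ H' → ReflTransGen K.FacetAdj H H' := fun {c _ _} hc hH hH' h h' => by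
      have := card_insert_of_notMem hc
      exact ih (by lia) hH hH' h h' (by lia)
    have hpq := hlk σ (by lia) p (mem_lk_of_mem hs hσs hps hpσ) q (mem_lk_of_mem ht hσt hqt hqσ)
    induction hpq generalizing t with
    | refl => exact ih_insert hpσ hs ht (insert_subset hps hσs) (insert_subset hqt hσt)
    | @tail b c _ hbc ihpath =>
      obtain ⟨hb, hc, hbcK⟩ := vertAdj_lk.1 hbc
      obtain ⟨H, hH, hHmax⟩ := K.faces.exists_le_maximal hbcK
      rw [← isFacet_iff_maximal] at hHmax
      obtain ⟨hbH, hcH, hσH⟩ : b ∈ H ∧ c ∈ H ∧ σ ⊆ H := by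
        simpa only [insert_subset_iff] using hH
      exact (ihpath hHmax hσH hbH hb).trans
        (ih_insert hc hHmax ht (insert_subset hcH hσH) (insert_subset hqt hσt))

theorem isNormalPseudomanifold_of_links (hne : K.faces.Nonempty)
    (hfacet : ∀ s ∈ K.faces, ∃ F ∈ K.faces, s ⊆ F ∧ F.card = d + 1)
    (hridge : ∀ s ∈ K.faces, s.card = d → (K.lk s).vertexSet.card = 2)
    (hlk : ∀ σ : Finset ℕ, σ.card < d → ∀ p ∈ (K.lk σ).vertexSet, ∀ q ∈ (K.lk σ).vertexSet,
      (K.lk σ).Joined p q) :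
    K.IsNormalPseudomanifold d := by
  have hpure : K.IsPure d := by
    refine ⟨hne, fun s hs => ?_⟩
    obtain ⟨F, hF, hsF, hcard⟩ := hfacet s hs.1
    rw [hs.2 F hF hsF, hcard]
  refine ⟨hpure, fun s t hs ht => reflTransGen_facetAdj_of_joined_lk (σ := ∅) hpure hlk (by simp)
    hs ht (by simp) (by simp), fun s hs hsd => ?_, fun s hs hsd => ⟨?_, fun p q hp hq => ?_⟩⟩
  · rw [← hridge s hs hsd, ← card_cofaces, hsd]
  · have hspos : 0 < s.card := card_pos.2 (nonempty_of_mem hs)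
    obtain ⟨F, hF, hsF, hcard⟩ := hfacet s hs
    obtain ⟨p, hpF, hps⟩ := exists_mem_notMem_of_card_lt_card (show s.card < F.card by lia)
    exact ⟨{p}, mem_vertexSet.1 (mem_vertexSet_lk.2
      ⟨hps, mem_of_subset hF (insert_subset hpF hsF) (insert_nonempty p s)⟩)⟩
  · have hspos : 0 < s.card := card_pos.2 (nonempty_of_mem hs)
    exact hlk s (by lia) p (mem_vertexSet.2 hp) q (mem_vertexSet.2 hq)

/-! ### Deleting a vertex from a link -/

theorem exists_reflTransGen_avoiding {α : Type*} {r : α → α → Prop} {a b : α}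
    (h : ReflTransGen r a b) (hab : a ≠ b) :
    ∃ c ≠ b, r c b ∧ ReflTransGen (fun x y => r x y ∧ x ≠ b ∧ y ≠ b) a c := by
  induction h using ReflTransGen.head_induction_on with
  | refl => exact absurd rfl hab
  | @head a c hac _ ih =>
    by_cases hcb : c = b
    · exact ⟨a, hab, hcb ▸ hac, .refl⟩
    · obtain ⟨e, heb, he, hce⟩ := ih hcb
      exact ⟨e, heb, he, hce.head ⟨hac, hab, hcb⟩⟩

theorem Joined.exists_joined_antistar (h : K.Joined p v) (hpv : p ≠ v) :
    ∃ c ∈ (K.lk {v}).vertexSet, (K.antistar v).Joined p c := by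
  obtain ⟨c, hcv, hc, hpc⟩ := exists_reflTransGen_avoiding h hpv
  exact ⟨c, mem_vertexSet_lk.2 ⟨by simpa using hcv, hc⟩,
    ReflTransGen.mono (fun _ _ => vertAdj_antistar.2) _ _ hpc⟩

/-- The graph of vertices and edges of a complex. -/
def oneSkeleton (K : SComplex) : SimpleGraph K.vertexSet where
  Adj a b := a ≠ b ∧ K.VertAdj a b
  symm := ⟨fun _ _ h => ⟨h.1.symm, h.2.symm⟩⟩
  loopless := ⟨fun _ h => h.1 rfl⟩

theorem isCycles_oneSkeleton (hK : ∀ x ∈ K.vertexSet, (K.lk {x}).vertexSet.card = 2) :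
    K.oneSkeleton.IsCycles := by
  intro x _
  rw [← hK x x.2, ← Set.ncard_coe_finset, ← Set.ncard_image_of_injective _ Subtype.val_injective]
  congr 1
  ext y
  simp only [Set.mem_image, SimpleGraph.mem_neighborSet, oneSkeleton, mem_coe, mem_vertexSet_lk,
    mem_singleton, Subtype.exists, exists_and_right, exists_eq_right, ne_eq, Subtype.ext_iff]
  constructor
  · rintro ⟨⟨_, hxy⟩, hadj⟩
    exact ⟨Ne.symm hxy, VertAdj.symm hadj⟩
  · rintro ⟨hyx, hadj⟩
    exact ⟨⟨subset_vertexSet hadj (mem_insert_self y _), Ne.symm hyx⟩, VertAdj.symm hadj⟩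

theorem joined_antistar_of_card_lk_eq_two
    (hK : ∀ x ∈ K.vertexSet, (K.lk {x}).vertexSet.card = 2)
    (hp : p ∈ (K.lk {v}).vertexSet) (hq : q ∈ (K.lk {v}).vertexSet) :
    (K.antistar v).Joined p q := by
  obtain rfl | hpq := eq_or_ne p q
  · rfl
  obtain ⟨hpv, hpvK⟩ := mem_vertexSet_lk.1 hp
  have hpK : p ∈ K.vertexSet := subset_vertexSet hpvK (by simp)
  have hvK : v ∈ K.vertexSet := subset_vertexSet hpvK (by simp)
  rw [mem_singleton] at hpv
  -- In a union of cycles no edge is a bridge, so `p` and `v` stay joined without the edge `pv`.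
  have hreach := (isCycles_oneSkeleton hK).reachable_deleteEdges
    (show K.oneSkeleton.Adj ⟨p, hpK⟩ ⟨v, hvK⟩ from ⟨by simpa using hpv, hpvK⟩)
  have hpath : ReflTransGen (fun a b => K.VertAdj a b ∧ s(a, b) ≠ s(p, v)) p v := by
    refine ((SimpleGraph.reachable_iff_reflTransGen _ _).1 hreach).lift Subtype.val ?_
    intro a b hab
    rw [SimpleGraph.deleteEdges_adj] at hab
    refine ⟨hab.1.2, fun h => hab.2 ?_⟩
    simpa [Subtype.ext_iff] using h
  obtain ⟨c, hcv, ⟨hadj, hcp⟩, hpc⟩ := exists_reflTransGen_avoiding hpath hpv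
  have hc : c ∈ (K.lk {v}).vertexSet := mem_vertexSet_lk.2 ⟨by simpa using hcv, hadj⟩
  obtain rfl : c = q := by
    obtain ⟨y, z, -, hlk⟩ := card_eq_two.1 (hK v hvK)
    have hcp : c ≠ p := fun h => hcp (by rw [h])
    grind
  exact ReflTransGen.mono (fun _ _ h => vertAdj_antistar.2 ⟨h.1.1, h.2⟩) _ _ hpc

theorem IsNormalPseudomanifold.joined_antistar_lk (hK : K.IsNormalPseudomanifold d)
    (hσ : σ.card < d) (hp : p ∈ ((K.lk σ).antistar v).vertexSet)
    (hq : q ∈ ((K.lk σ).antistar v).vertexSet) : ((K.lk σ).antistar v).Joined p q := by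
  rw [vertexSet_antistar, mem_erase] at hp hq
  by_cases hv : v ∈ (K.lk σ).vertexSet
  · have hvσ := (mem_vertexSet_lk.1 hv).1
    have neighbors_joined : ∀ a ∈ ((K.lk σ).lk {v}).vertexSet,
        ∀ b ∈ ((K.lk σ).lk {v}).vertexSet, ((K.lk σ).antistar v).Joined a b := by
      intro a ha b hb
      have hcard := card_insert_of_notMem hvσ
      obtain hlt | heq := Nat.lt_or_eq_of_le (Nat.succ_le_of_lt hσ)
      · rw [lk_lk_singleton hvσ] at ha hb
        refine ReflTransGen.mono (fun x y hxy => ?_) _ _ (hK.joined_lk (hcard.trans_lt hlt) ha hb)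
        rw [← lk_lk_singleton hvσ, vertAdj_lk] at hxy
        exact vertAdj_antistar.2 ⟨mem_of_subset hxy.2.2
          (insert_subset_insert x (insert_subset_insert y (empty_subset _))) (by simp), by grind⟩
      · refine joined_antistar_of_card_lk_eq_two (fun x hx => ?_) ha hb
        obtain ⟨hxσ, hxK⟩ := mem_vertexSet_lk.1 hx
        rw [lk_lk_singleton hxσ]
        exact hK.card_vertexSet_lk hxK (by rw [card_insert_of_notMem hxσ, ← heq])
    obtain ⟨a, ha, hpa⟩ := (hK.joined_lk hσ hp.2 hv).exists_joined_antistar hp.1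
    obtain ⟨b, hb, hqb⟩ := (hK.joined_lk hσ hq.2 hv).exists_joined_antistar hq.1
    exact (hpa.trans (neighbors_joined a ha b hb)).trans hqb.symm
  · refine ReflTransGen.mono (fun x y hxy => vertAdj_antistar.2 ⟨hxy, ?_, ?_⟩) _ _
      (hK.joined_lk hσ hp.2 hq.2) <;>
    exact fun h => notMem_of_notMem_vertexSet hv hxy (by simp [h])

/-! ### Edge contractions -/

theorem faces_eq_antistar_union_coneFaces (hw : w ∈ K.vertexSet) :
    K.faces = (K.antistar w).faces ∪ coneFaces w (K.lk {w}).faces := by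
  ext s
  simp only [mem_union, mem_antistar, coneFaces, mem_image, mem_singleton, mem_lk_singleton]
  constructor
  · intro hs
    by_cases hws : w ∈ s
    · obtain hrest | hrest := (s.erase w).eq_empty_or_nonempty
      · exact .inr (.inr ((erase_eq_empty_iff s w).1 hrest |>.resolve_left (by grind)))
      · exact .inr (.inl (.inr ⟨s.erase w, ⟨hrest, notMem_erase w s, by rwa [insert_erase hws]⟩,
          insert_erase hws⟩))
    · exact .inl ⟨hs, hws⟩
  · rintro (hs | (⟨hne, -, hs⟩ | ⟨γ, ⟨-, -, hγ⟩, rfl⟩) | rfl)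
    · exact hs.1
    · exact mem_of_subset hs (subset_insert w s) hne
    · exact hγ
    · exact mem_vertexSet.1 hw

theorem IsNormalPseudomanifold.bdryFaces_antistar (hK : K.IsNormalPseudomanifold d) (w : ℕ) :
    bdryFaces (K.antistar w).faces d = (K.lk {w}).faces := by
  have card_cofaces_antistar : ∀ r ∈ (K.antistar w).faces, r.card = d →
      ((K.antistar w).faces.filter fun F => F.card = d + 1 ∧ r ⊆ F).card =
        ((K.lk r).vertexSet.erase w).card := fun r hr hrd => by
    rw [← vertexSet_lk_antistar (mem_antistar.1 hr).2, ← card_cofaces, hrd]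
  ext s
  simp only [bdryFaces, mem_filter, mem_lk_singleton]
  constructor
  · rintro ⟨hs, r, hr, hsr, hrd, hone⟩
    have htwo := hK.card_vertexSet_lk (mem_antistar.1 hr).1 hrd
    rw [card_cofaces_antistar r hr hrd] at hone
    have hw : w ∈ (K.lk r).vertexSet := by
      by_contra hw
      rw [erase_eq_of_notMem hw] at hone
      lia
    exact ⟨nonempty_of_mem hs, (mem_antistar.1 hs).2, mem_of_subset (mem_vertexSet_lk.1 hw).2
      (insert_subset_insert w hsr) (insert_nonempty w s)⟩
  · rintro ⟨hne, hws, hs⟩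
    obtain ⟨F, hF, hsF, hFd⟩ := hK.1.exists_facet_superset hs
    have hwF : w ∈ F := hsF (mem_insert_self w s)
    have hsr : s ⊆ F.erase w := subset_erase.2 ⟨(subset_insert w s).trans hsF, hws⟩
    have hr : F.erase w ∈ K.faces := mem_of_subset hF (erase_subset w F) (hne.mono hsr)
    have hrd : (F.erase w).card = d := by rw [card_erase_of_mem hwF, hFd, Nat.add_sub_cancel]
    have hr' := mem_antistar.2 ⟨hr, notMem_erase w F⟩
    refine ⟨mem_antistar.2 ⟨mem_of_subset hr hsr hne, hws⟩, F.erase w, hr', hsr, hrd, ?_⟩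
    rw [card_cofaces_antistar _ hr' hrd, card_erase_of_mem, hK.card_vertexSet_lk hr hrd]
    exact mem_vertexSet_lk.2 ⟨notMem_erase w F, by rwa [insert_erase hwF]⟩

/-- The image of a complex under a map of vertices. -/
def map (K : SComplex) (f : ℕ → ℕ) : SComplex where
  faces := K.faces.image (image f)
  not_empty_mem h := by
    obtain ⟨s, hs, hs'⟩ := mem_image.1 h
    exact K.not_empty_mem (image_eq_empty.1 hs' ▸ hs)
  down_closed s hs t hts ht := by
    obtain ⟨r, hr, rfl⟩ := mem_image.1 hs
    obtain ⟨r', hr', rfl⟩ := subset_image_iff.1 hts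
    exact mem_image_of_mem _ (K.down_closed r hr r' hr' fun h => ht (h ▸ image_empty f))

/-- The vertex map that identifies `u` and `v` to the vertex `w`. -/
def collapse (u v w z : ℕ) : ℕ := if z = u ∨ z = v then w else z

/-- The contraction of the edge `uv` to the vertex `w`, as a simplicial image. This is the complex
of `EdgeContractionAt`, see `edgeContractionAt_contract`. -/
def contract (K : SComplex) (u v w : ℕ) : SComplex := K.map (collapse u v w)

/-- The link condition for the edge `uv`, under which it may be contracted. -/
structure IsContractible (K : SComplex) (u v : ℕ) : Prop where
  edge_mem : {u, v} ∈ K.faces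
  ne : u ≠ v
  lk_inter_lk : (K.lk {u}).faces ∩ (K.lk {v}).faces = (K.lk {u, v}).faces

theorem contract_comm (K : SComplex) (u v w : ℕ) : K.contract u v w = K.contract v u w := by
  rw [contract, contract, show collapse u v w = collapse v u w from
    funext fun _ => if_congr or_comm rfl rfl]

theorem image_collapse_of_notMem (hu : u ∉ s) (hv : v ∉ s) : s.image (collapse u v w) = s := by
  conv_rhs => rw [← image_id (s := s)]
  refine image_congr fun z hz => if_neg ?_
  rintro (rfl | rfl)
  exacts [hu hz, hv hz]

theorem image_collapse_of_mem (h : u ∈ s ∨ v ∈ s) :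
    s.image (collapse u v w) = insert w ((s.erase u).erase v) := by
  ext z
  simp only [mem_image, collapse, mem_insert, mem_erase]
  grind

theorem card_image_collapse (hw : w ∉ s) (h : u ∉ s ∨ v ∉ s) :
    (s.image (collapse u v w)).card = s.card := by
  refine card_image_of_injOn fun a ha b hb hab => ?_
  simp only [mem_coe, collapse] at ha hb hab
  grind

theorem mem_contract_of_notMem (hws : w ∉ s) :
    s ∈ (K.contract u v w).faces ↔ u ∉ s ∧ v ∉ s ∧ s ∈ K.faces := by
  constructor
  · intro hs
    obtain ⟨r, hr, rfl⟩ := mem_image.1 hs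
    by_cases hur : u ∈ r ∨ v ∈ r
    · simp [image_collapse_of_mem hur] at hws
    · push Not at hur
      rw [image_collapse_of_notMem hur.1 hur.2]
      exact ⟨hur.1, hur.2, hr⟩
  · rintro ⟨hu, hv, hs⟩
    exact mem_image.2 ⟨s, hs, image_collapse_of_notMem hu hv⟩

theorem insert_mem_contract (hw : w ∉ K.vertexSet) (hws : w ∉ s) :
    insert w s ∈ (K.contract u v w).faces ↔
      u ∉ s ∧ v ∉ s ∧ (insert u s ∈ K.faces ∨ insert v s ∈ K.faces) := by
  constructor
  · intro hs
    obtain ⟨r, hr, hrs⟩ := mem_image.1 hs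
    have hwr := notMem_of_notMem_vertexSet hw hr
    by_cases hur : u ∈ r ∨ v ∈ r
    · have hs : (r.erase u).erase v = s := by
        rw [← erase_insert hws, ← hrs, image_collapse_of_mem hur, erase_insert (by grind)]
      refine ⟨by grind, by grind, hur.imp (fun hu => ?_) fun hv => ?_⟩ <;>
        exact mem_of_subset hr (by grind) (insert_nonempty _ _)
    · push Not at hur
      rw [image_collapse_of_notMem hur.1 hur.2] at hrs
      exact absurd (hrs ▸ mem_insert_self w s) hwr
  · rintro ⟨hu, hv, hs | hs⟩
    · exact mem_image.2 ⟨_, hs, by rw [image_collapse_of_mem (.inl (mem_insert_self u s))]; grind⟩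
    · exact mem_image.2 ⟨_, hs, by rw [image_collapse_of_mem (.inr (mem_insert_self v s))]; grind⟩

namespace IsContractible

theorem symm (h : K.IsContractible u v) : K.IsContractible v u :=
  ⟨pair_comm u v ▸ h.edge_mem, h.ne.symm, by rw [inter_comm, h.lk_inter_lk, pair_comm]⟩

theorem left_mem (h : K.IsContractible u v) : u ∈ K.vertexSet :=
  subset_vertexSet h.edge_mem (mem_insert_self u _)

theorem right_mem (h : K.IsContractible u v) : v ∈ K.vertexSet :=
  h.symm.left_mem

theorem insert_insert_mem (h : K.IsContractible u v) (hu : u ∉ γ) (hv : v ∉ γ)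
    (huγ : insert u γ ∈ K.faces) (hvγ : insert v γ ∈ K.faces) :
    insert u (insert v γ) ∈ K.faces := by
  obtain rfl | hne := γ.eq_empty_or_nonempty
  · exact h.edge_mem
  · have hγ : γ ∈ (K.lk {u}).faces ∩ (K.lk {v}).faces :=
      mem_inter.2 ⟨mem_lk_singleton.2 ⟨hne, hu, huγ⟩, mem_lk_singleton.2 ⟨hne, hv, hvγ⟩⟩
    rw [h.lk_inter_lk] at hγ
    exact (mem_lk_pair.1 hγ).2.2.2

end IsContractible

theorem exists_image_collapse_eq (h : K.IsContractible u v) (hs : s ∈ (K.contract u v w).faces) :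
    ∃ r ∈ K.faces, (u ∉ r ∨ v ∉ r) ∧ r.image (collapse u v w) = s := by
  obtain ⟨r, hr, rfl⟩ := mem_image.1 hs
  by_cases hur : u ∈ r ∧ v ∈ r
  · refine ⟨r.erase u, mem_of_subset hr (erase_subset u r) ⟨v, by grind [h.ne]⟩, by simp, ?_⟩
    rw [image_collapse_of_mem (.inr (by grind [h.ne])), image_collapse_of_mem (.inl hur.1),
      erase_idem]
  · exact ⟨r, hr, by tauto, rfl⟩

theorem antistar_contract (K : SComplex) (u v w : ℕ) (hw : w ∉ K.vertexSet) :
    (K.contract u v w).antistar w = (K.antistar v).antistar u := by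
  ext s
  simp only [mem_antistar]
  constructor
  · rintro ⟨hs, hws⟩
    have := (mem_contract_of_notMem hws).1 hs
    tauto
  · rintro ⟨⟨hs, hv⟩, hu⟩
    have hws := notMem_of_notMem_vertexSet hw hs
    exact ⟨(mem_contract_of_notMem hws).2 ⟨hu, hv, hs⟩, hws⟩

/-! #### Links in a contraction -/

theorem vertexSet_lk_contract (hw : w ∉ K.vertexSet) (hwσ : w ∉ σ) (hu : u ∉ σ) (hv : v ∉ σ) :
    ((K.contract u v w).lk σ).vertexSet = (K.lk σ).vertexSet.image (collapse u v w) := by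
  ext p
  have hwlk : w ∉ (K.lk σ).vertexSet := fun h =>
    hw (subset_vertexSet (mem_vertexSet_lk.1 h).2 (mem_insert_self w σ))
  obtain rfl | hpw := eq_or_ne p w
  · rw [mem_vertexSet_lk, insert_mem_contract hw hwσ]
    by_cases h : u ∈ (K.lk σ).vertexSet ∨ v ∈ (K.lk σ).vertexSet
    · rw [image_collapse_of_mem h]
      simp only [mem_vertexSet_lk] at h
      simp only [mem_insert_self, iff_true]
      tauto
    · push Not at h
      rw [image_collapse_of_notMem h.1 h.2]
      simp only [mem_vertexSet_lk] at h hwlk ⊢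
      tauto
  · rw [mem_vertexSet_lk, mem_contract_of_notMem (by grind)]
    simp only [mem_image, mem_vertexSet_lk, collapse]
    grind

theorem vertexSet_lk_insert_contract (hw : w ∉ K.vertexSet) (hwσ : w ∉ σ) (hu : u ∉ σ)
    (hv : v ∉ σ) :
    ((K.contract u v w).lk (insert w σ)).vertexSet =
      (K.lk (insert u σ)).vertexSet.erase v ∪ (K.lk (insert v σ)).vertexSet.erase u := by
  ext p
  have hpw : insert p (insert u σ) ∈ K.faces ∨ insert p (insert v σ) ∈ K.faces → p ≠ w := by
    rintro (h | h) rfl <;> exact notMem_of_notMem_vertexSet hw h (mem_insert_self _ _)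
  simp only [mem_vertexSet_lk, mem_union, mem_erase]
  by_cases hp : p = w
  · grind
  · rw [insert_comm, insert_mem_contract hw (by grind), insert_comm u, insert_comm v]
    grind

theorem joined_lk_contract_of_joined (hwσ : w ∉ σ) (hu : u ∉ σ) (hv : v ∉ σ)
    (hpq : (K.lk σ).Joined p q) :
    ((K.contract u v w).lk σ).Joined (collapse u v w p) (collapse u v w q) := by
  refine ReflTransGen.lift (collapse u v w) (fun a b hab => ?_) _ _ hpq
  rw [vertAdj_lk] at hab
  have collapse_notMem : ∀ z ∉ σ, collapse u v w z ∉ σ := fun z hz => by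
    rw [collapse]
    split_ifs
    exacts [hwσ, hz]
  have himage : (insert a (insert b σ)).image (collapse u v w) =
      insert (collapse u v w a) (insert (collapse u v w b) σ) := by
    rw [image_insert, image_insert, image_collapse_of_notMem hu hv]
  exact vertAdj_lk.2 ⟨collapse_notMem a hab.1, collapse_notMem b hab.2.1,
    himage ▸ mem_image_of_mem _ hab.2.2⟩

theorem joined_lk_insert_contract_of_joined (hw : w ∉ K.vertexSet) (hwσ : w ∉ σ) (hu : u ∉ σ)
    (hv : v ∉ σ) (hpq : ((K.lk (insert u σ)).antistar v).Joined p q) :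
    ((K.contract u v w).lk (insert w σ)).Joined p q := by
  refine ReflTransGen.mono (fun a b hab => ?_) _ _ hpq
  obtain ⟨habK, hav, hbv⟩ := vertAdj_antistar.1 hab
  obtain ⟨ha, hb, habK⟩ := vertAdj_lk.1 habK
  have hwab := notMem_of_notMem_vertexSet hw habK
  refine vertAdj_lk.2 ⟨by grind, by grind, ?_⟩
  rw [insert_comm b, insert_comm a, insert_mem_contract hw (by grind)]
  refine ⟨by grind, by grind, .inl ?_⟩
  rwa [insert_comm u, insert_comm u]

theorem joined_lk_contract (hw : w ∉ K.vertexSet) (hK : K.IsNormalPseudomanifold d)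
    (hwσ : w ∉ σ) (hu : u ∉ σ) (hv : v ∉ σ) (hσ : σ.card < d)
    (hp : p ∈ ((K.contract u v w).lk σ).vertexSet)
    (hq : q ∈ ((K.contract u v w).lk σ).vertexSet) :
    ((K.contract u v w).lk σ).Joined p q := by
  rw [vertexSet_lk_contract hw hwσ hu hv, mem_image] at hp hq
  obtain ⟨p, hp, rfl⟩ := hp
  obtain ⟨q, hq, rfl⟩ := hq
  exact joined_lk_contract_of_joined hwσ hu hv (hK.joined_lk hσ hp hq)

/-! #### The contraction of a normal pseudomanifold -/

namespace IsContractible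

theorem exists_facet_contract (h : K.IsContractible u v) (hw : w ∉ K.vertexSet)
    (hK : K.IsNormalPseudomanifold d) (hs : s ∈ (K.contract u v w).faces) :
    ∃ F ∈ (K.contract u v w).faces, s ⊆ F ∧ F.card = d + 1 := by
  obtain ⟨r, hr, hur, rfl⟩ := exists_image_collapse_eq h hs
  obtain ⟨F, hF, hrF, hcard, huF⟩ : ∃ F ∈ K.faces, r ⊆ F ∧ F.card = d + 1 ∧ (u ∉ F ∨ v ∉ F) := by
    obtain hu | hv := hur
    · obtain ⟨F, hF, hrF, hcard, huF⟩ := hK.exists_facet_notMem hr hu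
      exact ⟨F, hF, hrF, hcard, .inl huF⟩
    · obtain ⟨F, hF, hrF, hcard, hvF⟩ := hK.exists_facet_notMem hr hv
      exact ⟨F, hF, hrF, hcard, .inr hvF⟩
  exact ⟨_, mem_image_of_mem _ hF, image_subset_image hrF,
    by rw [card_image_collapse (notMem_of_notMem_vertexSet hw hF) huF, hcard]⟩

theorem card_vertexSet_lk_erase (h : K.IsContractible u v) (hK : K.IsNormalPseudomanifold d)
    (hu : u ∉ σ) (hv : v ∉ σ) (hσ : σ.card + 1 = d) (huσ : insert u σ ∈ K.faces) :
    ((K.lk (insert u σ)).vertexSet.erase v).card +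
      (if insert v σ ∈ K.faces then 1 else 0) = 2 := by
  have hcard := hK.card_vertexSet_lk huσ (by rw [card_insert_of_notMem hu, hσ])
  have hmem : v ∈ (K.lk (insert u σ)).vertexSet ↔ insert v σ ∈ K.faces := by
    rw [mem_vertexSet_lk, insert_comm]
    exact ⟨fun hm => mem_of_subset hm.2 (subset_insert u _) (insert_nonempty v σ),
      fun hm => ⟨by grind [h.ne], h.insert_insert_mem hu hv huσ hm⟩⟩
  rw [card_erase_eq_ite, hcard]
  split_ifs <;> tauto

theorem card_vertexSet_lk_contract (h : K.IsContractible u v) (hw : w ∉ K.vertexSet)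
    (hK : K.IsNormalPseudomanifold d) (hwσ : w ∉ σ)
    (hσ : σ ∈ (K.contract u v w).faces) (hσd : σ.card = d) :
    ((K.contract u v w).lk σ).vertexSet.card = 2 := by
  obtain ⟨hu, hv, hσK⟩ := (mem_contract_of_notMem hwσ).1 hσ
  have hwlk : w ∉ (K.lk σ).vertexSet := fun hm =>
    hw (subset_vertexSet (mem_vertexSet_lk.1 hm).2 (mem_insert_self w σ))
  have not_both : u ∉ (K.lk σ).vertexSet ∨ v ∉ (K.lk σ).vertexSet := by
    by_contra! hboth
    have huvσ := h.insert_insert_mem hu hv (mem_vertexSet_lk.1 hboth.1).2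
      (mem_vertexSet_lk.1 hboth.2).2
    have hle := hK.1.card_le huvσ
    rw [card_insert_of_notMem (by grind [h.ne]), card_insert_of_notMem hv, hσd] at hle
    lia
  rw [vertexSet_lk_contract hw hwσ hu hv, card_image_collapse hwlk not_both,
    hK.card_vertexSet_lk hσK hσd]

theorem card_vertexSet_lk_insert_contract (h : K.IsContractible u v) (hw : w ∉ K.vertexSet)
    (hK : K.IsNormalPseudomanifold d) (hwσ : w ∉ σ)
    (hσ : insert w σ ∈ (K.contract u v w).faces) (hσd : σ.card + 1 = d) :
    ((K.contract u v w).lk (insert w σ)).vertexSet.card = 2 := by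
  obtain ⟨hu, hv, hσK⟩ := (insert_mem_contract hw hwσ).1 hσ
  have hdisj : Disjoint ((K.lk (insert u σ)).vertexSet.erase v)
      ((K.lk (insert v σ)).vertexSet.erase u) := by
    refine disjoint_left.2 fun p hpu hpv => ?_
    simp only [mem_erase, mem_vertexSet_lk, mem_insert, not_or] at hpu hpv
    have huvp := h.insert_insert_mem (γ := insert p σ) (by grind) (by grind)
      (by rw [insert_comm]; exact hpu.2.2) (by rw [insert_comm]; exact hpv.2.2)
    have hle := hK.1.card_le huvp
    rw [card_insert_of_notMem (by grind [h.ne]), card_insert_of_notMem (by grind),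
      card_insert_of_notMem (by grind)] at hle
    lia
  have lk_eq_empty : ∀ x, insert x σ ∉ K.faces → (K.lk (insert x σ)).vertexSet = ∅ :=
    fun x hx => eq_empty_of_forall_notMem fun p hp => hx <|
      mem_of_subset (mem_vertexSet_lk.1 hp).2 (subset_insert p _) (insert_nonempty x σ)
  rw [vertexSet_lk_insert_contract hw hwσ hu hv, card_union_of_disjoint hdisj]
  have hcardu := h.card_vertexSet_lk_erase hK hu hv hσd
  have hcardv := h.symm.card_vertexSet_lk_erase hK hv hu hσd
  by_cases huσ : insert u σ ∈ K.faces <;> by_cases hvσ : insert v σ ∈ K.faces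
  · grind
  · simpa [hvσ, lk_eq_empty v hvσ] using hcardu huσ
  · simpa [huσ, lk_eq_empty u huσ] using hcardv hvσ
  · tauto

theorem exists_mem_vertexSet_lk_antistar (h : K.IsContractible u v)
    (hK : K.IsNormalPseudomanifold d) (hu : u ∉ σ) (hv : v ∉ σ) (hσ : σ.card + 1 < d)
    (huσ : insert u σ ∈ K.faces) (hvσ : insert v σ ∈ K.faces) :
    ∃ c, c ∈ ((K.lk (insert u σ)).antistar v).vertexSet ∧
      c ∈ ((K.lk (insert v σ)).antistar u).vertexSet := by
  have huv := h.insert_insert_mem hu hv huσ hvσ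
  obtain ⟨F, hF, huvF, hFd⟩ := hK.1.exists_facet_superset huv
  have hcard : (insert u (insert v σ)).card < F.card := by
    rw [card_insert_of_notMem (by grind [h.ne]), card_insert_of_notMem hv]
    lia
  obtain ⟨c, hcF, hc⟩ := exists_mem_notMem_of_card_lt_card hcard
  have hcK : insert c (insert u (insert v σ)) ∈ K.faces :=
    mem_of_subset hF (insert_subset hcF huvF) (insert_nonempty _ _)
  simp only [vertexSet_antistar, mem_erase, mem_vertexSet_lk]
  exact ⟨c, ⟨by grind, by grind, mem_of_subset hcK (by grind) (insert_nonempty _ _)⟩,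
    by grind, by grind, mem_of_subset hcK (by grind) (insert_nonempty _ _)⟩

theorem joined_lk_insert_contract (h : K.IsContractible u v) (hw : w ∉ K.vertexSet)
    (hK : K.IsNormalPseudomanifold d) (hwσ : w ∉ σ) (hu : u ∉ σ) (hv : v ∉ σ)
    (hσ : σ.card + 1 < d) (hp : p ∈ ((K.contract u v w).lk (insert w σ)).vertexSet)
    (hq : q ∈ ((K.contract u v w).lk (insert w σ)).vertexSet) :
    ((K.contract u v w).lk (insert w σ)).Joined p q := by
  rw [vertexSet_lk_insert_contract hw hwσ hu hv, ← vertexSet_antistar, ← vertexSet_antistar,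
    mem_union] at hp hq
  have joined_left : ∀ {a b}, a ∈ ((K.lk (insert u σ)).antistar v).vertexSet →
      b ∈ ((K.lk (insert u σ)).antistar v).vertexSet →
      ((K.contract u v w).lk (insert w σ)).Joined a b := fun ha hb =>
    joined_lk_insert_contract_of_joined hw hwσ hu hv
      (hK.joined_antistar_lk ((card_insert_of_notMem hu).trans_lt hσ) ha hb)
  have joined_right : ∀ {a b}, a ∈ ((K.lk (insert v σ)).antistar u).vertexSet →
      b ∈ ((K.lk (insert v σ)).antistar u).vertexSet →
      ((K.contract u v w).lk (insert w σ)).Joined a b := fun ha hb => by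
    rw [contract_comm]
    exact joined_lk_insert_contract_of_joined hw hwσ hv hu
      (hK.joined_antistar_lk ((card_insert_of_notMem hv).trans_lt hσ) ha hb)
  have joined_cross : ∀ {a b}, a ∈ ((K.lk (insert u σ)).antistar v).vertexSet →
      b ∈ ((K.lk (insert v σ)).antistar u).vertexSet →
      ((K.contract u v w).lk (insert w σ)).Joined a b := fun ha hb => by
    have insert_mem : ∀ {x y c}, c ∈ ((K.lk (insert x σ)).antistar y).vertexSet →
        insert x σ ∈ K.faces := fun hc => by
      rw [vertexSet_antistar, mem_erase, mem_vertexSet_lk] at hc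
      exact mem_of_subset hc.2.2 (subset_insert _ _) (insert_nonempty _ _)
    obtain ⟨c, hcu, hcv⟩ :=
      h.exists_mem_vertexSet_lk_antistar hK hu hv hσ (insert_mem ha) (insert_mem hb)
    exact (joined_left ha hcu).trans (joined_right hcv hb)
  obtain hp | hp := hp <;> obtain hq | hq := hq
  exacts [joined_left hp hq, joined_cross hp hq, (joined_cross hq hp).symm, joined_right hp hq]

theorem isNormalPseudomanifold_contract (h : K.IsContractible u v) (hw : w ∉ K.vertexSet)
    (hK : K.IsNormalPseudomanifold d) : (K.contract u v w).IsNormalPseudomanifold d := by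
  refine isNormalPseudomanifold_of_links (hK.1.1.image _)
    (fun s hs => h.exists_facet_contract hw hK hs) (fun s hs hsd => ?_) fun σ hσ p hp q hq => ?_
  · by_cases hws : w ∈ s
    · obtain ⟨t, hwt, rfl⟩ : ∃ t, w ∉ t ∧ insert w t = s :=
        ⟨s.erase w, notMem_erase w s, insert_erase hws⟩
      exact h.card_vertexSet_lk_insert_contract hw hK hwt hs
        (by rw [← hsd, card_insert_of_notMem hwt])
    · exact h.card_vertexSet_lk_contract hw hK hws hs hsd
  · have hpσ := (mem_vertexSet_lk.1 hp).2
    by_cases hwσ : w ∈ σ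
    · obtain ⟨t, hwt, rfl⟩ : ∃ t, w ∉ t ∧ insert w t = σ :=
        ⟨σ.erase w, notMem_erase w σ, insert_erase hwσ⟩
      have ht := mem_of_subset hpσ (subset_insert p _) (insert_nonempty w t)
      obtain ⟨hu, hv, -⟩ := (insert_mem_contract hw hwt).1 ht
      exact h.joined_lk_insert_contract hw hK hwt hu hv (by rwa [← card_insert_of_notMem hwt]) hp hq
    · obtain ⟨hu, hv⟩ : u ∉ σ ∧ v ∉ σ := by
        obtain rfl | hne := σ.eq_empty_or_nonempty
        · simp
        · have hmem := (mem_contract_of_notMem hwσ).1 (mem_of_subset hpσ (subset_insert p σ) hne)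
          exact ⟨hmem.1, hmem.2.1⟩
      exact joined_lk_contract hw hK hwσ hu hv hσ hp hq

theorem left_mem_contract (h : K.IsContractible u v) (hw : w ∉ K.vertexSet) :
    w ∈ (K.contract u v w).vertexSet :=
  mem_vertexSet.2 <| (insert_mem_contract hw (notMem_empty w)).2
    ⟨notMem_empty u, notMem_empty v, .inl (mem_vertexSet.1 h.left_mem)⟩

theorem edgeContractionAt_contract (h : K.IsContractible u v) (hw : w ∉ K.vertexSet)
    (hK : K.IsNormalPseudomanifold d) : EdgeContractionAt d K u v (K.contract u v w) := by
  refine ⟨h.edge_mem, h.ne, h.lk_inter_lk, w, hw, ?_⟩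
  have hantistar : ((K.contract u v w).antistar w).faces =
      K.faces.filter fun α => u ∉ α ∧ v ∉ α := by
    ext s
    simp only [antistar_contract K u v w hw, mem_antistar, mem_filter]
    tauto
  rw [← hantistar, (h.isNormalPseudomanifold_contract hw hK).bdryFaces_antistar]
  exact faces_eq_antistar_union_coneFaces (h.left_mem_contract hw)

theorem fnum_zero_contract (h : K.IsContractible u v) (hw : w ∉ K.vertexSet) :
    (K.contract u v w).fnum 0 + 1 = K.fnum 0 := by
  have hu : u ∈ (K.antistar v).vertexSet := by
    rw [vertexSet_antistar]
    exact mem_erase.2 ⟨h.ne, h.left_mem⟩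
  rw [fnum_zero_eq (h.left_mem_contract hw), antistar_contract K u v w hw, fnum_zero_eq h.right_mem,
    fnum_zero_eq hu]

theorem deg_contract (h : K.IsContractible u v) (hw : w ∉ K.vertexSet) :
    (K.contract u v w).deg {w} + K.deg {u, v} =
      (K.antistar v).deg {u} + (K.antistar u).deg {v} := by
  have hinter : (K.lk {u}).vertexSet.erase v ∩ (K.lk {v}).vertexSet.erase u =
      (K.lk {u, v}).vertexSet := by
    ext p
    simp only [mem_inter, mem_erase, mem_vertexSet, ← h.lk_inter_lk, mem_lk_singleton,
      mem_singleton]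
    tauto
  have hlink := vertexSet_lk_insert_contract hw (notMem_empty w) (notMem_empty u) (notMem_empty v)
  simp only [insert_empty] at hlink
  simp only [deg_eq]
  rw [vertexSet_lk_antistar (by simpa using h.ne.symm), vertexSet_lk_antistar (by simpa using h.ne),
    hlink, ← hinter, card_union_add_card_inter]

theorem fnum_one_contract (h : K.IsContractible u v) (hw : w ∉ K.vertexSet) :
    (K.contract u v w).fnum 1 + K.deg {u, v} + 1 = K.fnum 1 := by
  have hv : u ∈ (K.lk {v}).vertexSet := mem_vertexSet_lk.2 ⟨by simpa using h.ne, h.edge_mem⟩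
  have hdeg : (K.antistar u).deg {v} + 1 = K.deg {v} := by
    rw [deg_eq, deg_eq, vertexSet_lk_antistar (by simpa using h.ne), card_erase_add_one hv]
  have hcontract := (K.contract u v w).fnum_one_eq w
  rw [antistar_contract K u v w hw] at hcontract
  have hK := K.fnum_one_eq v
  have hKv := (K.antistar v).fnum_one_eq u
  have := h.deg_contract hw
  lia

theorem g2_contract (h : K.IsContractible u v) (hw : w ∉ K.vertexSet) :
    (K.contract u v w).g2 = K.g2 + 3 - K.deg {u, v} := by
  have hzero := h.fnum_zero_contract hw
  have hone := h.fnum_one_contract hw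
  rw [g2, g2]
  lia

end IsContractible

/-! ### Bistellar moves -/

/-- The face `A` and the non-face `T` form a bistellar pair if the link of `A` is the boundary of
the simplex `T`, so that the subcomplex `A * ∂T` may be replaced by `∂A * T`. -/
structure IsBistellarPair (K : SComplex) (A T : Finset ℕ) : Prop where
  left_mem : A ∈ K.faces
  right_notMem : T ∉ K.faces
  right_nonempty : T.Nonempty
  disjoint : Disjoint A T
  lk_faces : (K.lk A).faces = properFaces T

/-- The result of the bistellar move replacing `A * ∂T` by `∂A * T`. -/
def bistellarMove (K : SComplex) (A T : Finset ℕ) : SComplex where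
  faces := (K.faces ∪ simplexFaces (A ∪ T)).filter (¬ A ⊆ ·)
  not_empty_mem h := by
    obtain h | h := mem_union.1 (mem_filter.1 h).1
    · exact K.not_empty_mem h
    · exact (mem_filter.1 h).2 rfl
  down_closed s hs t hts ht := by
    simp only [simplexFaces, mem_filter, mem_union, mem_powerset] at hs ⊢
    refine ⟨hs.1.imp (K.down_closed s · t hts ht) fun h => ⟨hts.trans h.1, ht⟩,
      fun h => hs.2 (h.trans hts)⟩

theorem mem_bistellarMove :
    s ∈ (K.bistellarMove A T).faces ↔ (s ∈ K.faces ∨ s ⊆ A ∪ T ∧ s.Nonempty) ∧ ¬ A ⊆ s := by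
  simp only [bistellarMove, simplexFaces, mem_filter, mem_union, mem_powerset,
    nonempty_iff_ne_empty]

theorem mem_bistellarMove_of_subset (hs : s ⊆ A ∪ T) (hne : s.Nonempty) :
    s ∈ (K.bistellarMove A T).faces ↔ ¬ A ⊆ s := by
  rw [mem_bistellarMove]
  tauto

namespace IsBistellarPair

theorem left_nonempty (h : K.IsBistellarPair A T) : A.Nonempty :=
  nonempty_of_mem h.left_mem

theorem mem_iff_of_subset (h : K.IsBistellarPair A T) (hs : s ⊆ A ∪ T) (hne : s.Nonempty) :
    s ∈ K.faces ↔ ¬ T ⊆ s := by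
  refine ⟨fun hsK hT => h.right_notMem (mem_of_subset hsK hT h.right_nonempty), fun hT => ?_⟩
  have hsA : s ⊆ s ∩ T ∪ A := fun x hx => by grind
  refine mem_of_subset ?_ hsA hne
  obtain hemp | hnemp := (s ∩ T).eq_empty_or_nonempty
  · rw [hemp, empty_union]
    exact h.left_mem
  · have hproper : s ∩ T ∈ properFaces T := mem_filter.2 ⟨mem_powerset.2 inter_subset_right,
      hnemp.ne_empty, fun heq => hT (inter_eq_right.1 heq)⟩
    rw [← h.lk_faces, mem_lk] at hproper
    exact hproper.2.2

theorem subset_of_left_subset (h : K.IsBistellarPair A T) (hs : s ∈ K.faces) (hA : A ⊆ s) :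
    s ⊆ A ∪ T := by
  obtain hemp | hne := (s \ A).eq_empty_or_nonempty
  · exact (sdiff_eq_empty_iff_subset.1 hemp).trans subset_union_left
  · have hlk : s \ A ∈ (K.lk A).faces :=
      mem_lk.2 ⟨hne, sdiff_disjoint, by rwa [sdiff_union_of_subset hA]⟩
    rw [h.lk_faces] at hlk
    exact sdiff_le_iff.1 (mem_powerset.1 (mem_filter.1 hlk).1)

theorem mem_bistellarMove_of_not_subset (h : K.IsBistellarPair A T) (hs : ¬ s ⊆ A ∪ T) :
    s ∈ (K.bistellarMove A T).faces ↔ s ∈ K.faces := by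
  have := h.subset_of_left_subset (s := s)
  rw [mem_bistellarMove]
  tauto

theorem lk_bistellarMove_of_not_subset (h : K.IsBistellarPair A T) (hσ : ¬ σ ⊆ A ∪ T) :
    (K.bistellarMove A T).lk σ = K.lk σ := by
  ext γ
  rw [mem_lk, mem_lk, h.mem_bistellarMove_of_not_subset fun hγ => hσ (union_subset_right hγ)]

theorem card_union (h : K.IsBistellarPair A T) (hK : K.IsPure d) : (A ∪ T).card = d + 2 := by
  obtain ⟨t, ht⟩ := h.right_nonempty
  have htA : t ∉ A := disjoint_right.1 h.disjoint ht
  have hA : A ⊆ (A ∪ T).erase t := subset_erase.2 ⟨subset_union_left, htA⟩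
  have hfacet : (A ∪ T).erase t ∈ K.faces :=
    (h.mem_iff_of_subset (erase_subset _ _) (h.left_nonempty.mono hA)).2
      fun hT => notMem_erase t _ (hT ht)
  obtain ⟨F, hF, hsub, hFd⟩ := hK.exists_facet_superset hfacet
  have hFB := h.subset_of_left_subset hF (hA.trans hsub)
  have htF : t ∉ F := fun htF => (h.mem_iff_of_subset hFB (nonempty_of_mem hF)).1 hF fun x hx => by
    obtain rfl | hxt := eq_or_ne x t
    exacts [htF, hsub (mem_erase.2 ⟨hxt, mem_union_right A hx⟩)]
  rw [← card_erase_add_one (mem_union_right A ht),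
    hsub.antisymm (subset_erase.2 ⟨hFB, htF⟩), hFd]

theorem exists_facet_bistellarMove (h : K.IsBistellarPair A T) (hK : K.IsPure d)
    (hs : s ∈ (K.bistellarMove A T).faces) :
    ∃ F ∈ (K.bistellarMove A T).faces, s ⊆ F ∧ F.card = d + 1 := by
  by_cases hsB : s ⊆ A ∪ T
  · have hne := nonempty_of_mem hs
    obtain ⟨a, ha, has⟩ := not_subset.1 ((mem_bistellarMove_of_subset hsB hne).1 hs)
    have hsub : s ⊆ (A ∪ T).erase a := subset_erase.2 ⟨hsB, has⟩
    refine ⟨(A ∪ T).erase a, ?_, hsub, ?_⟩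
    · exact (mem_bistellarMove_of_subset (erase_subset _ _) (hne.mono hsub)).2
        fun hA => notMem_erase a _ (hA ha)
    · rw [card_erase_of_mem (mem_union_left T ha), h.card_union hK, Nat.add_succ_sub_one]
  · obtain ⟨F, hF, hsF, hFd⟩ :=
      hK.exists_facet_superset ((h.mem_bistellarMove_of_not_subset hsB).1 hs)
    exact ⟨F, (h.mem_bistellarMove_of_not_subset fun hFB => hsB (hsF.trans hFB)).2 hF, hsF, hFd⟩

theorem mem_vertexSet_lk_bistellarMove (h : K.IsBistellarPair A T) (hs : s ⊆ A ∪ T) :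
    p ∈ ((K.bistellarMove A T).lk s).vertexSet ↔
      p ∉ s ∧ (p ∈ A ∪ T ∧ ¬ A ⊆ insert p s ∨ p ∉ A ∪ T ∧ insert p s ∈ K.faces) := by
  rw [mem_vertexSet_lk]
  by_cases hp : p ∈ A ∪ T
  · rw [mem_bistellarMove_of_subset (insert_subset hp hs) (insert_nonempty p s)]
    tauto
  · rw [h.mem_bistellarMove_of_not_subset fun hsub => hp (hsub (mem_insert_self p s))]
    tauto

theorem vertexSet_lk_bistellarMove_of_right_subset (h : K.IsBistellarPair A T)
    (hs : s ⊆ A ∪ T) (hT : T ⊆ s) (hcompl : 1 < ((A ∪ T) \ s).card) :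
    ((K.bistellarMove A T).lk s).vertexSet = (A ∪ T) \ s := by
  ext p
  have hpK : insert p s ∉ K.faces := fun hpK =>
    h.right_notMem (mem_of_subset hpK (hT.trans (subset_insert p s)) h.right_nonempty)
  obtain ⟨y, hy, hyp⟩ := exists_mem_ne hcompl p
  have hA : ¬ A ⊆ insert p s := fun hA => by grind
  rw [h.mem_vertexSet_lk_bistellarMove hs, mem_sdiff]
  tauto

theorem card_vertexSet_lk_bistellarMove_of_compl_eq (h : K.IsBistellarPair A T)
    (hs : s ⊆ A ∪ T) (hp : p ∈ A) (hq : q ∈ T) (hcompl : (A ∪ T) \ s = {p, q}) :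
    ((K.bistellarMove A T).lk s).vertexSet.card = (K.lk s).vertexSet.card := by
  have hpT : p ∉ T := disjoint_left.1 h.disjoint hp
  have hqA : q ∉ A := disjoint_right.1 h.disjoint hq
  have mem_compl : ∀ x, x ∈ A ∪ T ∧ x ∉ s ↔ x = p ∨ x = q := fun x => by
    rw [← mem_sdiff, hcompl, mem_insert, mem_singleton]
  have hps := ((mem_compl p).2 (.inl rfl)).2
  have hA : A ⊆ insert p s := fun x hx => by grind
  have hT : T ⊆ insert q s := fun x hx => by grind
  have hpK : p ∈ (K.lk s).vertexSet := mem_vertexSet_lk.2 ⟨hps, (h.mem_iff_of_subset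
    (insert_subset (mem_union_left T hp) hs) (insert_nonempty p s)).2 (by grind)⟩
  have hqK : q ∉ (K.lk s).vertexSet := fun hqK => h.right_notMem <|
    mem_of_subset (mem_vertexSet_lk.1 hqK).2 hT h.right_nonempty
  have hlk : ((K.bistellarMove A T).lk s).vertexSet = insert q ((K.lk s).vertexSet.erase p) := by
    ext x
    rw [h.mem_vertexSet_lk_bistellarMove hs, mem_insert, mem_erase, mem_vertexSet_lk]
    grind
  rw [hlk, card_insert_of_notMem fun hmem => hqK (mem_of_mem_erase hmem), card_erase_add_one hpK]

theorem card_vertexSet_lk_bistellarMove (h : K.IsBistellarPair A T)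
    (hK : K.IsNormalPseudomanifold d) (hs : s ∈ (K.bistellarMove A T).faces) (hsd : s.card = d) :
    ((K.bistellarMove A T).lk s).vertexSet.card = 2 := by
  by_cases hsB : s ⊆ A ∪ T
  swap
  · rw [h.lk_bistellarMove_of_not_subset hsB]
    exact hK.card_vertexSet_lk ((h.mem_bistellarMove_of_not_subset hsB).1 hs) hsd
  have hne := nonempty_of_mem hs
  have hcompl : ((A ∪ T) \ s).card = 2 := by
    rw [card_sdiff_of_subset hsB, h.card_union hK.1, hsd, Nat.add_sub_cancel_left]
  by_cases hsT : T ⊆ s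
  · rw [h.vertexSet_lk_bistellarMove_of_right_subset hsB hsT (by lia), hcompl]
  · obtain ⟨x, hxA, hxs⟩ := not_subset.1 ((mem_bistellarMove_of_subset hsB hne).1 hs)
    obtain ⟨y, hyT, hys⟩ := not_subset.1 hsT
    have hxy : x ≠ y := fun hxy => disjoint_left.1 h.disjoint hxA (hxy ▸ hyT)
    have hcompl : (A ∪ T) \ s = {x, y} := by
      refine (eq_of_subset_of_card_le ?_ ?_).symm
      · grind
      · rw [hcompl, card_pair hxy]
    rw [h.card_vertexSet_lk_bistellarMove_of_compl_eq hsB hxA hyT hcompl,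
      hK.card_vertexSet_lk ((h.mem_iff_of_subset hsB hne).2 hsT) hsd]

theorem joined_lk_bistellarMove_of_subset (h : K.IsBistellarPair A T) (hσ : σ ⊆ A ∪ T)
    (hcard : 2 < ((A ∪ T) \ σ).card) (hp : p ∈ ((K.bistellarMove A T).lk σ).vertexSet)
    (hq : q ∈ ((K.bistellarMove A T).lk σ).vertexSet) (hpB : p ∈ A ∪ T) (hqB : q ∈ A ∪ T) :
    ((K.bistellarMove A T).lk σ).Joined p q := by
  rw [h.mem_vertexSet_lk_bistellarMove hσ] at hp hq
  have adj : ∀ {a b}, a ∉ σ → b ∉ σ → a ∈ A ∪ T → b ∈ A ∪ T → ¬ A ⊆ insert a (insert b σ) →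
      ((K.bistellarMove A T).lk σ).VertAdj a b := fun ha hb haB hbB hA =>
    vertAdj_lk.2 ⟨ha, hb, (mem_bistellarMove_of_subset (insert_subset haB (insert_subset hbB hσ))
      (insert_nonempty _ _)).2 hA⟩
  by_cases hA : A ⊆ insert p (insert q σ)
  · obtain ⟨c, hc⟩ : (((A ∪ T) \ σ) \ {p, q}).Nonempty :=
      card_pos.1 (by have := le_card_sdiff {p, q} ((A ∪ T) \ σ); grind [card_le_two])
    simp only [mem_sdiff, mem_insert, mem_singleton, not_or] at hc
    have hpA : p ∈ A := by grind
    have hqA : q ∈ A := by grind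
    exact .tail (.single (adj hp.1 hc.1.2 hpB hc.1.1 (by grind)))
      (adj hc.1.2 hq.1 hc.1.1 hqB (by grind))
  · exact .single (adj hp.1 hq.1 hpB hqB hA)

theorem exists_mem_union_joined_lk_bistellarMove (h : K.IsBistellarPair A T)
    (hK : K.IsNormalPseudomanifold d) (hσ : σ ⊆ A ∪ T) (hσd : σ.card < d)
    (hp : p ∈ ((K.bistellarMove A T).lk σ).vertexSet) :
    ∃ b ∈ A ∪ T, ((K.bistellarMove A T).lk σ).Joined p b := by
  by_cases hpB : p ∈ A ∪ T
  · exact ⟨p, hpB, .refl⟩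
  have hpK : p ∈ (K.lk σ).vertexSet := by
    have := (h.mem_vertexSet_lk_bistellarMove hσ).1 hp
    rw [mem_vertexSet_lk]
    tauto
  obtain ⟨t, htT, htσ⟩ : ∃ t ∈ T, t ∉ σ := not_subset.1 fun hT => h.right_notMem <|
    mem_of_subset (mem_vertexSet_lk.1 hpK).2 (hT.trans (subset_insert p σ)) h.right_nonempty
  have hcompl : 1 < ((A ∪ T) \ σ).card := by
    rw [card_sdiff_of_subset hσ, h.card_union hK.1]
    lia
  obtain ⟨b, hb, hbt⟩ := exists_mem_ne hcompl t
  obtain ⟨hbB, hbσ⟩ := mem_sdiff.1 hb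
  have hbK : b ∈ (K.lk σ).vertexSet := mem_vertexSet_lk.2
    ⟨hbσ, (h.mem_iff_of_subset (insert_subset hbB hσ) (insert_nonempty b σ)).2 (by grind)⟩
  have hpath := hK.joined_lk hσd hpK hbK
  clear hp hpB hpK
  induction hpath using ReflTransGen.head_induction_on with
  | refl => exact ⟨b, hbB, .refl⟩
  | @head x c hxc _ ih =>
    by_cases hxB : x ∈ A ∪ T
    · exact ⟨x, hxB, .refl⟩
    · obtain ⟨b', hb', hcb'⟩ := ih
      obtain ⟨hx, hc, hxcK⟩ := vertAdj_lk.1 hxc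
      refine ⟨b', hb', .head (vertAdj_lk.2 ⟨hx, hc, ?_⟩) hcb'⟩
      exact (h.mem_bistellarMove_of_not_subset fun hsub => hxB (hsub (mem_insert_self x _))).2 hxcK

theorem isNormalPseudomanifold_bistellarMove (h : K.IsBistellarPair A T)
    (hK : K.IsNormalPseudomanifold d) : (K.bistellarMove A T).IsNormalPseudomanifold d := by
  have hT : T ∈ (K.bistellarMove A T).faces :=
    (mem_bistellarMove_of_subset subset_union_right h.right_nonempty).2 fun hA =>
      h.left_nonempty.ne_empty (disjoint_self.1 (h.disjoint.mono_right hA))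
  refine isNormalPseudomanifold_of_links ⟨T, hT⟩
    (fun s hs => h.exists_facet_bistellarMove hK.1 hs)
    (fun s hs hsd => h.card_vertexSet_lk_bistellarMove hK hs hsd) fun σ hσd p hp q hq => ?_
  by_cases hσ : σ ⊆ A ∪ T
  · obtain ⟨a, ha, hpa⟩ := h.exists_mem_union_joined_lk_bistellarMove hK hσ hσd hp
    obtain ⟨b, hb, hqb⟩ := h.exists_mem_union_joined_lk_bistellarMove hK hσ hσd hq
    have hcard : 2 < ((A ∪ T) \ σ).card := by
      rw [card_sdiff_of_subset hσ, h.card_union hK.1]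
      lia
    have hab := h.joined_lk_bistellarMove_of_subset hσ hcard (hpa.mem_vertexSet hp)
      (hqb.mem_vertexSet hq) ha hb
    exact hpa.trans (hab.trans hqb.symm)
  · rw [h.lk_bistellarMove_of_not_subset hσ] at *
    exact hK.joined_lk hσd hp hq

theorem mem_bistellarMove_of_card_lt (h : K.IsBistellarPair A T) (hs : s.card < T.card) :
    s ∈ (K.bistellarMove A T).faces ↔ s ∈ K.faces ∧ ¬ A ⊆ s := by
  have hT : ¬ T ⊆ s := fun hT => (card_le_card hT).not_gt hs
  have := h.mem_iff_of_subset (s := s)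
  rw [mem_bistellarMove]
  tauto

theorem fnum_bistellarMove_of_lt (h : K.IsBistellarPair A T) (hA : i + 1 < A.card)
    (hT : i + 1 < T.card) : (K.bistellarMove A T).fnum i = K.fnum i := by
  rw [fnum, fnum]
  congr 1
  ext s
  simp only [mem_filter, and_congr_left_iff]
  intro hs
  rw [h.mem_bistellarMove_of_card_lt (hs ▸ hT), and_iff_left]
  exact fun hAs => (card_le_card hAs).not_gt (hs ▸ hA)

theorem fnum_bistellarMove_add_one (h : K.IsBistellarPair A T) (hA : A.card = i + 1)
    (hT : i + 1 < T.card) : (K.bistellarMove A T).fnum i + 1 = K.fnum i := by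
  have herase : ((K.bistellarMove A T).faces.filter fun s => s.card = i + 1) =
      (K.faces.filter fun s => s.card = i + 1).erase A := by
    ext s
    simp only [mem_filter, mem_erase]
    by_cases hs : s.card = i + 1
    · have hAs : A ⊆ s ↔ s = A :=
        ⟨fun hsub => (eq_of_subset_of_card_le hsub (hs.trans hA.symm).le).symm, fun h => h.ge⟩
      rw [h.mem_bistellarMove_of_card_lt (hs ▸ hT), hAs]
      tauto
    · tauto
  rw [fnum, fnum, herase, card_erase_add_one (mem_filter.2 ⟨h.left_mem, hA⟩)]

theorem g2_bistellarMove (h : K.IsBistellarPair A T) (hA : A.card = 2) (hT : T.card = 3) :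
    (K.bistellarMove A T).g2 = K.g2 - 1 := by
  have hzero : (K.bistellarMove A T).fnum 0 = K.fnum 0 :=
    h.fnum_bistellarMove_of_lt (by lia) (by lia)
  have hone : (K.bistellarMove A T).fnum 1 + 1 = K.fnum 1 :=
    h.fnum_bistellarMove_add_one hA (by lia)
  rw [g2, g2]
  lia

theorem bistellarTwoMove (h : K.IsBistellarPair {u, v} T) (huv : u ≠ v) (hT : T.card = 3) :
    K.BistellarTwoMove (K.bistellarMove {u, v} T) := by
  obtain ⟨a, b, c, -, -, -, rfl⟩ := card_eq_three.1 hT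
  have hu := disjoint_left.1 h.disjoint (mem_insert_self u {v})
  have hv := disjoint_left.1 h.disjoint (mem_insert_of_mem (mem_singleton_self v))
  refine ⟨u, v, a, b, c, h.left_mem, huv, hT, hu, hv, h.lk_faces, h.right_notMem, ?_⟩
  generalize ({a, b, c} : Finset ℕ) = T at *
  ext s
  simp only [mem_bistellarMove, mem_union, mem_filter, simplexFaces, mem_powerset,
    ← nonempty_iff_ne_empty, insert_subset_iff, singleton_subset_iff]
  have hsub : s ⊆ {u, v} ∪ T ∧ ¬ (u ∈ s ∧ v ∈ s) ↔ s ⊆ insert u T ∨ s ⊆ insert v T := by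
    constructor
    · rintro ⟨hs, huvs⟩
      by_cases hus : u ∈ s
      · exact .inl fun x hx => by grind
      · exact .inr fun x hx => by grind
    · grind
  tauto

end IsBistellarPair

/-! ### Links with few vertices -/

theorem IsNormalPseudomanifold.card_vertexSet_lk_of_card_le (hK : K.IsNormalPseudomanifold d)
    (hσ : σ ∈ K.faces) (hσd : σ.card ≤ d) (hdeg : (K.lk σ).vertexSet.card + σ.card ≤ d + 2) :
    (K.lk σ).vertexSet.card + σ.card = d + 2 ∧
      ∀ x ∈ (K.lk σ).vertexSet, ((K.lk σ).vertexSet ∪ σ).erase x ∈ K.faces := by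
  obtain ⟨F, hF, hσF, hFd⟩ := hK.1.exists_facet_superset hσ
  have hcardunion : ((K.lk σ).vertexSet ∪ σ).card = (K.lk σ).vertexSet.card + σ.card :=
    card_union_of_disjoint (K.disjoint_vertexSet_lk σ)
  have subset_union : ∀ {s}, s ∈ K.faces → σ ⊆ s → s ⊆ (K.lk σ).vertexSet ∪ σ := by
    intro s hs hσs x hx
    by_cases hxσ : x ∈ σ
    · exact mem_union_right _ hxσ
    · exact mem_union_left _ (mem_vertexSet_lk.2
        ⟨hxσ, mem_of_subset hs (insert_subset hx hσs) (insert_nonempty x σ)⟩)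
  have flip : ∀ x ∈ F, x ∉ σ → ∃ y ∉ F, insert y (F.erase x) ∈ K.faces ∧
      insert y F = (K.lk σ).vertexSet ∪ σ := by
    intro x hxF hxσ
    have hσR : σ ⊆ F.erase x := subset_erase.2 ⟨hσF, hxσ⟩
    obtain ⟨y, hyF, hyK⟩ := hK.exists_insert_erase_mem hF hFd hxF ((nonempty_of_mem hσ).mono hσR)
    refine ⟨y, hyF, hyK, eq_of_subset_of_card_le (insert_subset ?_ (subset_union hF hσF)) ?_⟩
    · exact subset_union hyK (hσR.trans (subset_insert y _)) (mem_insert_self y _)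
    · rw [card_insert_of_notMem hyF]
      lia
  obtain ⟨x, hxF, hxσ⟩ := exists_mem_notMem_of_card_lt_card (s := σ) (t := F) (by lia)
  obtain ⟨y, hyF, -, hinsert⟩ := flip x hxF hxσ
  refine ⟨by rw [← hcardunion, ← hinsert, card_insert_of_notMem hyF, hFd], fun z hz => ?_⟩
  rw [← hinsert]
  obtain rfl | hzF := mem_insert.1 (hinsert ▸ mem_union_left σ hz : z ∈ insert y F)
  · rwa [erase_insert hyF]
  · obtain ⟨y', hyF', hyK', hinsert'⟩ := flip z hzF (mem_vertexSet_lk.1 hz).1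
    rw [hinsert, ← hinsert', erase_insert_of_ne (by rintro rfl; exact hyF' hzF)]
    exact hyK'

theorem IsNormalPseudomanifold.lk_faces_eq_properFaces (hK : K.IsNormalPseudomanifold d)
    (hσ : σ ∈ K.faces) (hσd : σ.card ≤ d)
    (hdeg : (K.lk σ).vertexSet.card + σ.card ≤ d + 2) :
    (K.lk σ).faces = properFaces (K.lk σ).vertexSet := by
  obtain ⟨hcard, herase⟩ := hK.card_vertexSet_lk_of_card_le hσ hσd hdeg
  have hdisj := K.disjoint_vertexSet_lk σ
  ext γ
  simp only [properFaces, mem_filter, mem_powerset]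
  constructor
  · intro hγ
    refine ⟨subset_vertexSet hγ, (nonempty_of_mem hγ).ne_empty, fun heq => ?_⟩
    have hle := hK.1.card_le (mem_lk.1 hγ).2.2
    rw [heq, card_union_of_disjoint hdisj] at hle
    lia
  · rintro ⟨hsub, hne, hneq⟩
    obtain ⟨z, hz, hzγ⟩ := exists_of_ssubset (hsub.ssubset_of_ne hneq)
    refine mem_lk.2 ⟨nonempty_iff_ne_empty.2 hne, hdisj.mono_left hsub, mem_of_subset (herase z hz)
      (subset_erase.2 ⟨union_subset_union_left hsub, ?_⟩) ((nonempty_of_mem hσ).inr)⟩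
    rw [mem_union, not_or]
    exact ⟨hzγ, (mem_vertexSet_lk.1 hz).1⟩

theorem mem_of_mem_properFaces_insert (hx : x ∈ K.vertexSet) (hT : T ∈ K.faces)
    (hcone : ∀ γ ∈ properFaces T, insert x γ ∈ K.faces) (ht : t ∈ properFaces (insert x T)) :
    t ∈ K.faces := by
  simp only [properFaces, mem_filter, mem_powerset, ← nonempty_iff_ne_empty] at hcone ht
  obtain ⟨hsub, hne, hneq⟩ := ht
  by_cases hxt : x ∈ t
  · obtain hempty | hne' := (t.erase x).eq_empty_or_nonempty
    · rw [← insert_erase hxt, hempty]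
      exact mem_vertexSet.1 hx
    · rw [← insert_erase hxt] at hneq ⊢
      exact hcone _ ⟨subset_insert_iff.1 hsub, hne', fun heq => hneq (heq ▸ rfl)⟩
  · exact mem_of_subset hT ((subset_insert_iff_of_notMem hxt).1 hsub) hne

theorem IsContractible.isBistellarPair (h : K.IsContractible u v)
    (hlk : (K.lk {u, v}).faces = properFaces T) (hne : T.Nonempty) (hdisj : Disjoint {u, v} T)
    (hmissing : ∀ s : Finset ℕ, s.card = T.card + 1 → (∀ t ∈ properFaces s, t ∈ K.faces) →
      s ∈ K.faces) :
    K.IsBistellarPair {u, v} T := by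
  refine ⟨h.edge_mem, fun hT => ?_, hne, hdisj, hlk⟩
  have hu : u ∉ T := disjoint_left.1 hdisj (mem_insert_self u {v})
  have hv : v ∉ T := disjoint_left.1 hdisj (mem_insert_of_mem (mem_singleton_self v))
  have hcone : ∀ γ ∈ properFaces T, insert u (insert v γ) ∈ K.faces := fun γ hγ =>
    (mem_lk_pair.1 (hlk ▸ hγ)).2.2.2
  have huT : insert u T ∈ K.faces := hmissing _ (card_insert_of_notMem hu) fun t =>
    mem_of_mem_properFaces_insert h.left_mem hT fun γ hγ =>
      mem_of_subset (hcone γ hγ) (insert_subset_insert u (subset_insert v γ)) (insert_nonempty u γ)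
  have hvT : insert v T ∈ K.faces := hmissing _ (card_insert_of_notMem hv) fun t =>
    mem_of_mem_properFaces_insert h.right_mem hT fun γ hγ =>
      mem_of_subset (hcone γ hγ) (subset_insert u _) (insert_nonempty v γ)
  have hTlk : T ∈ (K.lk {u, v}).faces :=
    mem_lk_pair.2 ⟨hne, hu, hv, h.insert_insert_mem hu hv huT hvT⟩
  rw [hlk] at hTlk
  exact (mem_filter.1 hTlk).2.2 rfl

/-! ### Edges of locally minimal pseudomanifolds -/

theorem IsContractible.deg_le_three (h : K.IsContractible u v) (hK : K.IsNormalPseudomanifold 3)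
    (hmin : ∀ K' : SComplex, K'.IsNormalPseudomanifold 3 → EdgeContraction K K' → K.g2 ≤ K'.g2) :
    K.deg {u, v} ≤ 3 := by
  obtain ⟨w, hw⟩ := Infinite.exists_notMem_finset K.vertexSet
  have hle := hmin _ (h.isNormalPseudomanifold_contract hw hK)
    ⟨u, v, h.edgeContractionAt_contract hw hK⟩
  rw [h.g2_contract hw] at hle
  lia

theorem IsContractible.exists_bistellarTwoMove (h : K.IsContractible u v)
    (hK : K.IsNormalPseudomanifold 3) (hdeg : K.deg {u, v} ≤ 3)
    (hmissing : ∀ s : Finset ℕ, s.card = 4 → (∀ t ∈ properFaces s, t ∈ K.faces) → s ∈ K.faces) :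
    ∃ K' : SComplex, K'.IsNormalPseudomanifold 3 ∧ K.BistellarTwoMove K' ∧ K'.g2 = K.g2 - 1 := by
  have hedge : ({u, v} : Finset ℕ).card = 2 := card_pair h.ne
  rw [deg_eq] at hdeg
  have hlk := hK.lk_faces_eq_properFaces h.edge_mem (by lia) (by lia)
  have hcard : (K.lk {u, v}).vertexSet.card = 3 := by
    have := hK.card_vertexSet_lk_of_card_le h.edge_mem (by lia) (by lia)
    lia
  have hpair := h.isBistellarPair hlk (card_pos.1 (by lia)) (K.disjoint_vertexSet_lk {u, v}).symm
    (by rwa [hcard])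
  exact ⟨_, hpair.isNormalPseudomanifold_bistellarMove hK, hpair.bistellarTwoMove h.ne hcard,
    hpair.g2_bistellarMove hedge hcard⟩

theorem statement3_general (hK : K.IsNormalPseudomanifold 3)
    (hmissing : ∀ s : Finset ℕ, s.card = 4 → (∀ t ∈ properFaces s, t ∈ K.faces) → s ∈ K.faces)
    (hmin : ∀ K' : SComplex, K'.IsNormalPseudomanifold 3 →
      BistellarTwoMove K K' ∨ EdgeContraction K K' → K.g2 ≤ K'.g2)
    (huv : {u, v} ∈ K.faces) (hne : u ≠ v) :
    ∃ γ, γ ∈ (K.lk {u}).faces ∧ γ ∈ (K.lk {v}).faces ∧ γ ∉ (K.lk {u, v}).faces := by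
  by_contra! hlk
  have hcontractible : K.IsContractible u v := by
    refine ⟨huv, hne, Finset.Subset.antisymm (fun γ hγ => ?_) fun γ hγ => ?_⟩
    · exact hlk γ (mem_inter.1 hγ).1 (mem_inter.1 hγ).2
    · obtain ⟨hγ, hu, hv, hmem⟩ := mem_lk_pair.1 hγ
      rw [mem_inter, mem_lk_singleton, mem_lk_singleton]
      exact ⟨⟨hγ, hu, mem_of_subset hmem (by grind) (insert_nonempty u γ)⟩,
        hγ, hv, mem_of_subset hmem (by grind) (insert_nonempty v γ)⟩
  have hdeg := hcontractible.deg_le_three hK fun K' hK' h => hmin K' hK' (.inr h)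
  obtain ⟨K', hK', hmove, hg2⟩ := hcontractible.exists_bistellarTwoMove hK hdeg hmissing
  have := hmin K' hK' (.inl hmove)
  lia

end

/-- Lemma 3.2: in the class `R`, for an edge `uv` with `v` non-singular,
`lk(u) ∩ lk(v) − lk(uv)` is nonempty. -/
theorem statement3 (K : SComplex) (u v : ℕ) (hK : InClassR K)
    (huv : ({u, v} : Finset ℕ) ∈ K.faces) (hne : u ≠ v)
    (hv : K.HasSphereLink 3 v) :
    ∃ γ, γ ∈ (K.lk {u}).faces ∧ γ ∈ (K.lk {v}).faces ∧ γ ∉ (K.lk {u, v}).faces :=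
  statement3_general hK.1 hK.2.2.2.1
    (fun K' hK' h => hK.2.2.2.2 K' hK' (h.imp_right .inl)) huv hne

end SComplex
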